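/- For any permutation gate π ∈ 𝒞₃ on n qubits there exist Clifford permutation gates φ₁, φ₂ such that τ = φ₁ π φ₂ satisfies: τ(0) = 0; τ(eᵢ) = eᵢ for every i ∈ [n]; and for every i ∈ [n] the gate τ Xᵢ τ⁻¹ acts on basis states by v ↦ v + Aᵢv + eᵢ for some strictly lower triangular n×n matrix Aᵢ over 𝔽₂, where Xᵢ is the permutation gate v ↦ v + eᵢ. -/

import Mathlib

/-! Common framework: qubit gates, the Pauli group, the Clifford hierarchy,
permutation gates, Toffoli gates and staircase form, descending multiplications,
multilinear polynomial representations. -/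

/-- Vectors in `𝔽₂ⁿ`, indexing computational basis states. -/
abbrev QV (n : ℕ) := Fin n → ZMod 2

/-- `n`-qubit gates: `2ⁿ × 2ⁿ` complex matrices indexed by `𝔽₂ⁿ`. -/
abbrev QMat (n : ℕ) := Matrix (QV n) (QV n) ℂ

/-- Standard basis vector `eᵢ` of `𝔽₂ⁿ`. -/
def stdBasis (n : ℕ) (i : Fin n) : QV n := fun m => if m = i then 1 else 0

/-- The gate `X^u Z^z`, sending `|b⟩` to `(-1)^(z·b) |b+u⟩`. -/
noncomputable def XZGate (n : ℕ) (u z : QV n) : QMat n :=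
  fun a b => if a = b + u then (-1 : ℂ) ^ (∑ i, (z i).val * (b i).val) else 0

/-- The Pauli group on `n` qubits: gates `c·P₁⊗⋯⊗Pₙ`, `c ∈ {±1, ±i}`,
`Pᵢ ∈ {I,X,Y,Z}`, equivalently phases times `X^u Z^z`. -/
def PauliGroup (n : ℕ) : Set (QMat n) :=
  { P | ∃ (c : ℂ) (u z : QV n),
      (c = 1 ∨ c = -1 ∨ c = Complex.I ∨ c = -Complex.I) ∧ P = c • XZGate n u z }

/-- Level `k` of the Clifford hierarchy `𝒞ₖ` (level 1 is the Pauli group,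
level 2 the Clifford group; level 0 is junk/empty). -/
def CliffordLevel (n : ℕ) : ℕ → Set (QMat n)
  | 0 => ∅
  | 1 => PauliGroup n
  | (k+2) => { U | U ∈ Matrix.unitaryGroup (QV n) ℂ ∧
      ∀ P ∈ PauliGroup n, U * P * star U ∈ CliffordLevel n (k+1) }

/-- The permutation gate of a permutation `f` of `𝔽₂ⁿ`: sends `|v⟩` to `|f v⟩`. -/
noncomputable def permGate (n : ℕ) (f : QV n ≃ QV n) : QMat n :=
  fun a b => if a = f b then 1 else 0

/-- A diagonal gate. -/
def IsDiagonal (n : ℕ) (d : QMat n) : Prop := ∀ a b : QV n, a ≠ b → d a b = 0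

/-- A gate is semi-Clifford if it equals `φ₁ d φ₂` for Clifford `φ₁, φ₂` and diagonal `d`. -/
def IsSemiClifford (n : ℕ) (U : QMat n) : Prop :=
  ∃ φ₁ d φ₂ : QMat n, φ₁ ∈ CliffordLevel n 2 ∧ φ₂ ∈ CliffordLevel n 2 ∧
    IsDiagonal n d ∧ U = φ₁ * d * φ₂

/-- The underlying map of the Toffoli gate `TOF_{i,j,k}`: `v ↦ v + (vᵢvⱼ)·eₖ`. -/
def tofFun (n : ℕ) (i j k : Fin n) (v : QV n) : QV n :=
  fun m => if m = k then v m + v i * v j else v m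

/-- A map on `𝔽₂ⁿ` is in staircase form if it is a product (applied left-to-right)
of pairwise distinct Toffoli gates `TOF_{i,j,k}` with `i<j<k` and with targets
nondecreasing in the order the gates are applied. -/
def IsStaircase (n : ℕ) (g : QV n → QV n) : Prop :=
  ∃ L : List (Fin n × Fin n × Fin n),
    L.Nodup ∧
    (∀ t ∈ L, t.1 < t.2.1 ∧ t.2.1 < t.2.2) ∧
    List.Chain' (fun s t => s.2.2 ≤ t.2.2) L ∧
    g = fun v => L.foldl (fun w t => tofFun n t.1 t.2.1 t.2.2 w) v

/-- A descending multiplication on `𝔽₂ⁿ`: bilinear, associative, commutative,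
`eᵢeᵢ = 0`, and for `i < j`, `eᵢeⱼ ∈ span{eₖ : k > j}`. -/
def IsDescendingMul (n : ℕ) (mul : QV n → QV n → QV n) : Prop :=
  (∀ u v w : QV n, mul (u + v) w = mul u w + mul v w) ∧
  (∀ u v w : QV n, mul u (v + w) = mul u v + mul u w) ∧
  (∀ u v w : QV n, mul (mul u v) w = mul u (mul v w)) ∧
  (∀ u v : QV n, mul u v = mul v u) ∧
  (∀ i : Fin n, mul (stdBasis n i) (stdBasis n i) = 0) ∧
  (∀ i j : Fin n, i < j → ∀ m : Fin n, m ≤ j → mul (stdBasis n i) (stdBasis n j) m = 0)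

/-- The product `∏_{i ∈ l} eᵢ` under a multiplication, for a list `l` (junk `0` on `[]`). -/
def dmProdList (n : ℕ) (mul : QV n → QV n → QV n) : List (Fin n) → QV n
  | [] => 0
  | [i] => stdBasis n i
  | i :: j :: rest => mul (stdBasis n i) (dmProdList n mul (j :: rest))

/-- The product `∏_{i ∈ T} eᵢ` under a multiplication. -/
def dmProd (n : ℕ) (mul : QV n → QV n → QV n) (T : Finset (Fin n)) : QV n :=
  dmProdList n mul (T.sort (· ≤ ·))

/-- `g` is the map `∑_{i∈S} eᵢ ↦ ∑_{∅≠T⊆S} ∏_{i∈T} eᵢ` associated to a multiplication. -/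
def dmPiSpec (n : ℕ) (mul : QV n → QV n → QV n) (g : QV n → QV n) : Prop :=
  ∀ S : Finset (Fin n),
    g (∑ i ∈ S, stdBasis n i) = ∑ T ∈ S.powerset.erase ∅, dmProd n mul T

/-- The bilinear extension of `eᵢeⱼ := g(eᵢ+eⱼ) + eᵢ + eⱼ`. -/
def inducedMul (n : ℕ) (g : QV n → QV n) (u v : QV n) : QV n :=
  ∑ i : Fin n, ∑ j : Fin n,
    (u i * v j) • (g (stdBasis n i + stdBasis n j) + stdBasis n i + stdBasis n j)

/-- Coefficient of the monomial `∏_{i∈T} aᵢ` in the unique multilinear polynomial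
over `𝔽₂` representing `g : 𝔽₂ⁿ → 𝔽₂` (Möbius inversion over `𝔽₂`). -/
def mlCoeff (n : ℕ) (g : QV n → ZMod 2) (T : Finset (Fin n)) : ZMod 2 :=
  ∑ R ∈ T.powerset, g (∑ i ∈ R, stdBasis n i)

/-- Strictly lower triangular matrix. -/
def StrictLowerTri (n : ℕ) (A : Matrix (Fin n) (Fin n) (ZMod 2)) : Prop :=
  ∀ p q : Fin n, p ≤ q → A p q = 0

/-- Multiplication of basis vectors for the gate `U_k`: the basis of `𝔽₂^(2^k-1)` is
indexed by nonempty subsets `S ⊆ [k]`, encoded as indices `a` via the binary digits of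
`a+1`; `e_S e_T = e_{S∪T}` if `S ∩ T = ∅` and `e_S e_T = 0` otherwise. -/
def ukBasisMul (k : ℕ) (a b : Fin (2 ^ k - 1)) : QV (2 ^ k - 1) :=
  if (a.val + 1) &&& (b.val + 1) = 0 then
    (if h : a.val + b.val + 1 < 2 ^ k - 1 then stdBasis (2 ^ k - 1) ⟨a.val + b.val + 1, h⟩
     else 0)
  else 0

/-- The descending multiplication defining `U_k`, extended bilinearly. -/
def ukMul (k : ℕ) (u v : QV (2 ^ k - 1)) : QV (2 ^ k - 1) :=
  ∑ a : Fin (2 ^ k - 1), ∑ b : Fin (2 ^ k - 1), (u a * v b) • ukBasisMul k a b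

/-!
Conjugating the Pauli gates `X^u` by `π ∈ 𝒞₃` gives commuting Clifford permutations, that is, affine
maps of `𝔽₂ⁿ` of order at most two. In characteristic two an involution is unipotent, so the linear
parts are commuting unipotents and become unitriangular in a common basis. An affine change of
coordinates in the target thus makes `π` fix `0` and makes `π (x + u) - π x - π u` a strictly lower
triangular function of `π x`. To leading order such a `π` is additive, so the preimages of the `eᵢ`
are linearly independent; a linear change of coordinates in the source moves them to the `eᵢ` and
keeps the triangular shape, because the latter holds for every translation.
-/

/-! ### Simultaneous triangularization of commuting nilpotent endomorphisms -/

section Triangularization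

variable {R M ι : Type*} [Ring R] [AddCommGroup M] [Module R M]

lemma exists_pow_apply_notMem_of_isNilpotent {a : Module.End R M} (ha : IsNilpotent a)
    {W : Submodule R M} {w : M} (hw : w ∉ W) :
    ∃ k : ℕ, (a ^ k) w ∉ W ∧ a ((a ^ k) w) ∈ W := by
  by_contra! h
  obtain ⟨k, hk⟩ := ha
  have hpow : ∀ k : ℕ, (a ^ k) w ∉ W := fun k ↦ by
    induction k with
    | zero => simpa using hw
    | succ k ih => simpa [pow_succ'] using h k ih
  exact hpow k (by simp [hk])

lemma exists_notMem_forall_apply_mem [IsArtinian R M] {N : ι → Module.End R M}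
    (hnil : ∀ i, IsNilpotent (N i)) (hcomm : ∀ i j, Commute (N i) (N j)) {W : Submodule R M}
    (hW : ∀ i, W ∈ (N i).invtSubmodule) (hne : W ≠ ⊤) : ∃ w ∉ W, ∀ i, N i w ∈ W := by
  classical
  have hfin : ∀ S : Finset ι, ∃ w ∉ W, ∀ i ∈ S, N i w ∈ W := fun S ↦ by
    induction S using Finset.induction_on with
    | empty => simpa using SetLike.exists_not_mem_of_ne_top W hne rfl
    | insert a S _ ih =>
      obtain ⟨w, hw, hS⟩ := ih
      obtain ⟨k, hk, hak⟩ := exists_pow_apply_notMem_of_isNilpotent (hnil a) hw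
      refine ⟨(N a ^ k) w, hk, Finset.forall_mem_insert .. |>.2 ⟨hak, fun i hi ↦ ?_⟩⟩
      have hswap : N i ((N a ^ k) w) = (N a ^ k) (N i w) :=
        LinearMap.congr_fun ((hcomm i a).pow_right k).eq w
      rw [hswap]
      exact Module.End.pow_apply_mem_of_forall_mem k (hW a) _ (hS i hi)
  -- By the descending chain condition, finitely many `N i` impose all the conditions.
  obtain ⟨S, hS⟩ := Finset.exists_inf_le fun i ↦ W.comap (N i)
  obtain ⟨w, hw, hwS⟩ := hfin S
  exact ⟨w, hw, fun i ↦ hS i (by simpa [Submodule.mem_finsetInf] using hwS)⟩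

variable {K V : Type*} [Field K] [AddCommGroup V] [Module K V] [FiniteDimensional K V]
  {N : ι → Module.End K V}

lemma exists_linearIndependent_apply_mem_span_Ioi (hnil : ∀ i, IsNilpotent (N i))
    (hcomm : ∀ i j, Commute (N i) (N j)) {k : ℕ} (hk : k ≤ Module.finrank K V) :
    ∃ w : Fin k → V, LinearIndependent K w ∧
      ∀ i q, N i (w q) ∈ Submodule.span K (w '' Set.Ioi q) := by
  induction k with
  | zero => exact ⟨Fin.elim0, linearIndependent_empty_type, fun _ q ↦ q.elim0⟩
  | succ k ih =>
    obtain ⟨w, hw, hNw⟩ := ih (by lia)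
    have hinv : ∀ i, Submodule.span K (Set.range w) ∈ (N i).invtSubmodule := fun i ↦ by
      rw [Module.End.mem_invtSubmodule, Submodule.span_le]
      rintro _ ⟨q, rfl⟩
      exact Submodule.span_mono (Set.image_subset_range _ _) (hNw i q)
    have hne : Submodule.span K (Set.range w) ≠ ⊤ := fun htop ↦ by
      have hrank := finrank_span_eq_card hw
      rw [htop, finrank_top, Fintype.card_fin] at hrank
      lia
    obtain ⟨x, hx, hNx⟩ := exists_notMem_forall_apply_mem hnil hcomm hinv hne
    refine ⟨Fin.cons x w, linearIndependent_finCons.2 ⟨hw, hx⟩, fun i q ↦ ?_⟩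
    cases q using Fin.cases with
    | zero =>
      refine Submodule.span_mono ?_ (hNx i)
      rintro _ ⟨r, rfl⟩
      exact ⟨r.succ, Fin.succ_pos r, Fin.cons_succ ..⟩
    | succ q =>
      rw [Fin.cons_succ]
      refine Submodule.span_mono ?_ (hNw i q)
      rintro _ ⟨r, hr, rfl⟩
      exact ⟨r.succ, Fin.succ_lt_succ_iff.2 hr, Fin.cons_succ ..⟩

theorem exists_basis_toMatrix_eq_zero_of_le (hnil : ∀ i, IsNilpotent (N i))
    (hcomm : ∀ i j, Commute (N i) (N j)) {n : ℕ} (hn : Module.finrank K V = n) :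
    ∃ b : Module.Basis (Fin n) K V, ∀ i p q, p ≤ q → LinearMap.toMatrix b b (N i) p q = 0 := by
  obtain ⟨w, hw, hNw⟩ := exists_linearIndependent_apply_mem_span_Ioi hnil hcomm hn.ge
  let b := basisOfLinearIndependentOfCardEqFinrank' w hw (by simp [hn])
  have hb : ⇑b = w := coe_basisOfLinearIndependentOfCardEqFinrank' ..
  refine ⟨b, fun i p q hpq ↦ ?_⟩
  have hker : Submodule.span K (w '' Set.Ioi q) ≤ LinearMap.ker (b.coord p) := by
    rw [Submodule.span_le, ← hb]
    rintro _ ⟨r, hr, rfl⟩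
    simp [(hpq.trans_lt hr).ne']
  rw [LinearMap.toMatrix_apply, hb]
  exact hker (hNw i q)

end Triangularization

/-! ### Maps that are additive up to a strictly triangular error -/

/-- A coordinate-valued map `π` is triangularly additive if `π (x + u) - π x - π u` is a strictly
lower triangular linear function of `π x`. For a bijection `π` this says that `π` conjugates the
translation by `u` to an affine map `v ↦ v + A v + π u` with `A` strictly lower triangular. -/
def TriangularlyAdditive {V ι R : Type*} [Add V] [Fintype ι] [LE ι] [NonUnitalNonAssocSemiring R]
    (π : V → ι → R) : Prop :=
  ∀ u, ∃ A : Matrix ι ι R, (∀ p q, p ≤ q → A p q = 0) ∧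
    ∀ x, π (x + u) = π x + A.mulVec (π x) + π u

lemma mulVec_apply_eq_zero_of_strictLower {ι R : Type*} [Fintype ι] [LinearOrder ι]
    [NonUnitalNonAssocSemiring R] {A : Matrix ι ι R} (hA : ∀ p q, p ≤ q → A p q = 0) {m : ι}
    {v : ι → R} (hv : ∀ q < m, v q = 0) {p : ι} (hp : p ≤ m) : A.mulVec v p = 0 := by
  refine Finset.sum_eq_zero fun q _ ↦ (?_ : A p q * v q = 0)
  rcases lt_or_ge q p with hq | hq
  · rw [hv q (hq.trans_le hp), mul_zero]
  · rw [hA p q hq, zero_mul]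

namespace TriangularlyAdditive

variable {ι : Type*} [Fintype ι] [LinearOrder ι]

section Semiring

variable {V R : Type*} [Add V] [NonUnitalNonAssocSemiring R] {π : V → ι → R}

lemma comp {U F : Type*} [Add U] [FunLike F U V] [AddHomClass F U V]
    (hπ : TriangularlyAdditive π) (g : F) : TriangularlyAdditive (π ∘ g) := fun u ↦ by
  obtain ⟨A, hA, hAπ⟩ := hπ (g u)
  exact ⟨A, hA, fun x ↦ by simpa using hAπ (g x)⟩

lemma map_add_apply (hπ : TriangularlyAdditive π) {m : ι} {x : V} (hx : ∀ q < m, π x q = 0)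
    (u : V) {p : ι} (hp : p ≤ m) : π (x + u) p = π x p + π u p := by
  obtain ⟨A, hA, hAπ⟩ := hπ u
  simp [hAπ, mulVec_apply_eq_zero_of_strictLower hA hx hp]

end Semiring

section Ring

variable {V R : Type*} [AddCommMonoid V] [NonUnitalNonAssocRing R] {π : V → ι → R}

lemma map_zero (hπ : TriangularlyAdditive π) : π 0 = 0 := by
  obtain ⟨A, hA, hAπ⟩ := hπ 0
  funext i
  induction i using WellFoundedLT.induction with
  | ind i ih => simpa [mulVec_apply_eq_zero_of_strictLower hA ih le_rfl] using congrFun (hAπ 0) i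

lemma map_sum_apply (hπ : TriangularlyAdditive π) {κ : Type*} {S : Finset κ} {x : κ → V} {m : ι}
    (hx : ∀ k ∈ S, ∀ q < m, π (x k) q = 0) {p : ι} (hp : p ≤ m) :
    π (∑ k ∈ S, x k) p = ∑ k ∈ S, π (x k) p := by
  induction S using Finset.cons_induction with
  | empty => simp [hπ.map_zero]
  | cons a S _ ih =>
    obtain ⟨ha, hS⟩ := Finset.forall_mem_cons .. |>.1 hx
    rw [Finset.sum_cons, Finset.sum_cons, hπ.map_add_apply ha _ hp, ih hS]

end Ring

variable {n : ℕ} [NeZero n] {V : Type*} [AddCommGroup V] [Module (ZMod n) V]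
  {π : V → ι → ZMod n}

lemma map_smul_apply (hπ : TriangularlyAdditive π) (c : ZMod n) {m : ι} {x : V}
    (hx : ∀ q < m, π x q = 0) {p : ι} (hp : p ≤ m) : π (c • x) p = c * π x p := by
  have hsum := hπ.map_sum_apply (S := Finset.range c.val) (x := fun _ ↦ x) (fun _ _ ↦ hx) hp
  simpa [← Nat.cast_smul_eq_nsmul (ZMod n)] using hsum

lemma linearIndependent (hπ : TriangularlyAdditive π) {w : ι → V}
    (hw : ∀ i, π (w i) = Pi.single i 1) : LinearIndependent (ZMod n) w := by
  rw [Fintype.linearIndependent_iff]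
  intro c hc i
  induction i using WellFoundedLT.induction with
  | ind i ih =>
    have hterm : ∀ j, ∀ q ≤ i, π (c j • w j) q = c j * (Pi.single j 1 : ι → ZMod n) q := by
      intro j q hq
      rcases lt_or_ge j i with hj | hj
      · simp [ih j hj, hπ.map_zero]
      · rw [hπ.map_smul_apply (c j) (fun r hr ↦ by simp [hw, hr.ne]) (hq.trans hj), hw]
    have hvanish : ∀ j, ∀ q < i, π (c j • w j) q = 0 := by
      intro j q hq
      rw [hterm j q hq.le]
      rcases eq_or_ne q j with rfl | hqj
      · simp [ih q hq]
      · simp [hqj]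
    calc
      c i = ∑ j, π (c j • w j) i := by simp [hterm _ i le_rfl, Pi.single_apply]
      _ = π (∑ j, c j • w j) i := (hπ.map_sum_apply (fun j _ ↦ hvanish j) le_rfl).symm
      _ = 0 := by rw [hc, hπ.map_zero, Pi.zero_apply]

theorem exists_linearEquiv_apply_single {p : ℕ} [Fact p.Prime] [Module (ZMod p) V]
    [FiniteDimensional (ZMod p) V]
    {π : V → ι → ZMod p} (hπ : TriangularlyAdditive π) (hsurj : Function.Surjective π)
    (hV : Module.finrank (ZMod p) V = Fintype.card ι) :
    ∃ L : (ι → ZMod p) ≃ₗ[ZMod p] V, ∀ i, π (L (Pi.single i 1)) = Pi.single i 1 := by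
  choose w hw using fun i : ι ↦ hsurj (Pi.single i 1)
  have hli := hπ.linearIndependent hw
  let b := basisOfLinearIndependentOfCardEqFinrank' w hli hV.symm
  have hb : ⇑b = w := coe_basisOfLinearIndependentOfCardEqFinrank' ..
  exact ⟨b.equivFun.symm, fun i ↦ by simp [hb, hw]⟩

end TriangularlyAdditive

/-! ### Maps intertwining translations with affine maps -/

lemma isNilpotent_sub_one_of_pow_prime_eq_one {A : Type*} [Ring A] {p : ℕ} (hp : p.Prime)
    (hpA : (p : A) = 0) {a : A} (ha : a ^ p = 1) : IsNilpotent (a - 1) := by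
  obtain ⟨r, hr⟩ := (Commute.one_right (a - 1)).exists_add_pow_prime_eq hp
  exact ⟨p, by simpa [ha, hpA] using hr⟩

/-- `f` intertwines translations with affine maps if every translation of the source becomes,
through `f`, an affine map of the target. For a permutation `f` of `𝔽₂ⁿ` this is what membership
of the gate in `𝒞₃` says about the conjugates of the Pauli gates `X^u`. -/
def IntertwinesTranslations (K : Type*) {V W : Type*} [Ring K] [Add V] [AddCommGroup W]
    [Module K W] (f : V → W) : Prop :=
  ∀ u, ∃ a : W →ᵃ[K] W, ∀ x, f (x + u) = a (f x)

namespace IntertwinesTranslations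

variable {K V W : Type*} [AddCommGroup W] {f : V → W}

lemma exists_monoidHom [Ring K] [AddCommMonoid V] [Module K W] (hf : IntertwinesTranslations K f)
    (hsurj : Function.Surjective f) :
    ∃ ρ : Multiplicative V →* (W →ᵃ[K] W), ∀ u x, f (x + u) = ρ (.ofAdd u) (f x) := by
  choose a ha using hf
  have hone : a 0 = 1 := by
    ext y
    obtain ⟨x, rfl⟩ := hsurj y
    simp [← ha]
  have hmul : ∀ u v, a (u + v) = a u * a v := fun u v ↦ by
    ext y
    obtain ⟨x, rfl⟩ := hsurj y
    rw [AffineMap.coe_mul, Function.comp_apply, ← ha, ← ha, ← ha, add_assoc, add_comm v]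
  exact ⟨⟨⟨fun u ↦ a u.toAdd, hone⟩, fun u v ↦ hmul u.toAdd v.toAdd⟩, ha⟩

theorem exists_affineEquiv_triangularlyAdditive [Field K] [AddCommGroup V] [Module K V]
    [Module K W] [FiniteDimensional K W] (p : ℕ) [Fact p.Prime] [CharP K p] {n : ℕ}
    (hf : IntertwinesTranslations K f) (hW : Module.finrank K W = n)
    (hsurj : Function.Surjective f) :
    ∃ φ : W ≃ᵃ[K] (Fin n → K), TriangularlyAdditive (φ ∘ f) := by
  obtain ⟨ρ, hρ⟩ := hf.exists_monoidHom hsurj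
  let L : Multiplicative V →* Module.End K W := AffineMap.linearHom.comp ρ
  have hcomm : ∀ u v, Commute (L u - 1) (L v - 1) := fun u v ↦
    (((Commute.all u v).map L).sub_left (.one_left _)).sub_right (.one_right _)
  have hnil : ∀ u, IsNilpotent (L u - 1) := fun u ↦ by
    have hchar : (p : Module.End K W) = 0 := by
      rw [← map_natCast (algebraMap K (Module.End K W)), CharP.cast_eq_zero, map_zero]
    have hu : u ^ p = 1 := by
      rw [← toAdd_eq_zero, toAdd_pow, ← Nat.cast_smul_eq_nsmul K, CharP.cast_eq_zero, zero_smul]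
    exact isNilpotent_sub_one_of_pow_prime_eq_one Fact.out hchar (by rw [← map_pow, hu, map_one])
  obtain ⟨b, hb⟩ := exists_basis_toMatrix_eq_zero_of_le hnil hcomm hW
  refine ⟨(AffineEquiv.vaddConst K (f 0)).symm.trans b.equivFun.toAffineEquiv, fun u ↦
    ⟨_, hb (.ofAdd u), fun x ↦ ?_⟩⟩
  have hstep : f (x + u) - f 0 =
      (f x - f 0) + (L (.ofAdd u) - 1) (f x - f 0) + (f u - f 0) := by
    have hlin : L (.ofAdd u) (f x - f 0) = f (x + u) - f u := by
      rw [← zero_add u, hρ u 0, zero_add, hρ]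
      exact (ρ (.ofAdd u)).linearMap_vsub (f x) (f 0)
    rw [LinearMap.sub_apply, hlin, Module.End.one_apply]
    abel
  change b.equivFun (f (x + u) - f 0) = b.equivFun (f x - f 0) +
    Matrix.mulVec _ (b.equivFun (f x - f 0)) + b.equivFun (f u - f 0)
  rw [hstep, map_add, map_add]
  simp only [Module.Basis.equivFun_apply, LinearMap.toMatrix_mulVec_repr]

end IntertwinesTranslations

lemma exists_affineMap_of_forall_exists_add {m : ℕ} {V W : Type*} [AddCommGroup V]
    [AddCommGroup W] [Module (ZMod m) V] [Module (ZMod m) W] {g : V → W}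
    (hg : ∀ u, ∃ t, ∀ x, g (x + u) = g x + t) : ∃ a : V →ᵃ[ZMod m] W, ⇑a = g := by
  choose t ht using hg
  have hadd : ∀ u v, t (u + v) = t u + t v := fun u v ↦ by
    have h := ht (u + v) 0
    rw [← add_assoc, ht, ht, add_assoc] at h
    exact (add_left_cancel h).symm
  refine ⟨⟨g, (AddMonoidHom.mk' t hadd).toZModLinearMap m, fun x u ↦ ?_⟩, rfl⟩
  rw [vadd_eq_add, add_comm, ht, add_comm]
  rfl

/-! ### Permutation gates in the Clifford hierarchy -/

section Gates

variable {n : ℕ}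

/-- The nontrivial additive character `s ↦ (-1)ˢ` of `𝔽₂`, giving the phases of Pauli gates. -/
noncomputable def signChar : AddChar (ZMod 2) ℂ :=
  AddChar.zmodChar 2 (neg_one_sq : (-1 : ℂ) ^ 2 = 1)

lemma signChar_eq_one_or_neg_one (s : ZMod 2) : signChar s = 1 ∨ signChar s = -1 :=
  neg_one_pow_eq_or ℂ s.val

lemma XZGate_apply (u z a b : QV n) :
    XZGate n u z a b = if a = b + u then signChar (z ⬝ᵥ b) else 0 := by
  have hcast : z ⬝ᵥ b = ((∑ i, (z i).val * (b i).val : ℕ) : ZMod 2) := by simp [dotProduct]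
  rw [hcast, signChar, AddChar.zmodChar_apply', XZGate]

lemma XZGate_mem_pauliGroup (u z : QV n) : XZGate n u z ∈ PauliGroup n :=
  ⟨1, u, z, Or.inl rfl, (one_smul ..).symm⟩

lemma permGate_eq_permMatrix (f : QV n ≃ QV n) :
    permGate n f = Equiv.Perm.permMatrix ℂ f.symm := by
  ext a b
  simp [permGate, PEquiv.toMatrix_apply, Equiv.symm_apply_eq]

lemma permGate_mul_mul_star_permGate (f : QV n ≃ QV n) (M : QMat n) :
    permGate n f * M * star (permGate n f) = M.submatrix f.symm f.symm := by
  rw [permGate_eq_permMatrix, Matrix.star_eq_conjTranspose, Matrix.conjTranspose_permMatrix,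
    PEquiv.toMatrix_toPEquiv_mul, PEquiv.mul_toMatrix_toPEquiv]
  rfl

lemma permGate_mem_unitaryGroup (f : QV n ≃ QV n) :
    permGate n f ∈ Matrix.unitaryGroup (QV n) ℂ := by
  rw [Matrix.mem_unitaryGroup_iff]
  simpa using permGate_mul_mul_star_permGate f 1

lemma permGate_mul_XZGate_zero_mul_star (f : QV n ≃ QV n) (u : QV n) :
    permGate n f * XZGate n u 0 * star (permGate n f) =
      permGate n (f.permCongr (Equiv.addRight u)) := by
  rw [permGate_mul_mul_star_permGate]
  ext a b
  simp only [Matrix.submatrix_apply, XZGate_apply, permGate, zero_dotProduct,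
    AddChar.map_zero_eq_one, Equiv.permCongr_apply, Equiv.coe_addRight, Equiv.symm_apply_eq]
  -- The two sides differ only in their decidability instances.
  congr

lemma exists_permGate_mul_XZGate_mul_star (e : QV n ≃ᵃ[ZMod 2] QV n) (u z : QV n) :
    ∃ (s : ZMod 2) (z' : QV n), permGate n e.toEquiv * XZGate n u z * star (permGate n e.toEquiv) =
      signChar s • XZGate n (e.linear u) z' := by
  refine ⟨z ⬝ᵥ e.symm 0, Matrix.vecMul z (LinearMap.toMatrix' e.symm.linear.toLinearMap), ?_⟩
  rw [permGate_mul_mul_star_permGate]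
  ext a b
  have hshift : e.symm a = e.symm b + u ↔ a = b + e.linear u := by
    rw [← e.apply_eq_iff_eq, e.apply_symm_apply, add_comm, ← vadd_eq_add, e.map_vadd,
      e.apply_symm_apply, vadd_eq_add, add_comm]
  have hphase : z ⬝ᵥ e.symm b =
      z ⬝ᵥ e.symm 0 + Matrix.vecMul z (LinearMap.toMatrix' e.symm.linear.toLinearMap) ⬝ᵥ b := by
    rw [← Matrix.dotProduct_mulVec, LinearMap.toMatrix'_mulVec, ← dotProduct_add, add_comm]
    exact congrArg (z ⬝ᵥ ·) (congrFun e.symm.toAffineMap.decomp b)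
  simp [XZGate_apply, hshift, hphase, AddChar.map_add_eq_mul]

theorem permGate_mem_cliffordLevel_two_iff (g : QV n ≃ QV n) :
    permGate n g ∈ CliffordLevel n 2 ↔ ∃ a : QV n →ᵃ[ZMod 2] QV n, ⇑a = g := by
  constructor
  · refine fun hg ↦ exists_affineMap_of_forall_exists_add fun u ↦ ?_
    obtain ⟨c, t, z, -, ht⟩ := hg.2 _ (XZGate_mem_pauliGroup u 0)
    refine ⟨t, fun x ↦ ?_⟩
    have hentry := congrFun₂ ht (g (x + u)) (g x)
    rw [permGate_mul_XZGate_zero_mul_star] at hentry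
    by_contra hne
    simp [permGate, XZGate_apply, hne] at hentry
  · rintro ⟨a, ha⟩
    obtain ⟨e, rfl⟩ : ∃ e : QV n ≃ᵃ[ZMod 2] QV n, e.toEquiv = g :=
      ⟨.ofBijective (ha ▸ g.bijective), Equiv.ext fun x ↦ congrFun ha x⟩
    refine ⟨permGate_mem_unitaryGroup _, ?_⟩
    rintro _ ⟨c, u, z, hc, rfl⟩
    obtain ⟨s, z', hs⟩ := exists_permGate_mul_XZGate_mul_star e u z
    refine ⟨c * signChar s, e.linear u, z', ?_, ?_⟩
    · rcases signChar_eq_one_or_neg_one s with h | h <;>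
        rcases hc with rfl | rfl | rfl | rfl <;> simp [h]
    · rw [Matrix.mul_smul, Matrix.smul_mul, hs, smul_smul]

lemma intertwinesTranslations_of_permGate_mem_cliffordLevel_three {f : QV n ≃ QV n}
    (hf : permGate n f ∈ CliffordLevel n 3) : IntertwinesTranslations (ZMod 2) f := fun u ↦ by
  have hclifford := hf.2 _ (XZGate_mem_pauliGroup u 0)
  rw [permGate_mul_XZGate_zero_mul_star] at hclifford
  obtain ⟨a, ha⟩ := (permGate_mem_cliffordLevel_two_iff _).1 hclifford
  exact ⟨a, fun x ↦ by simp [ha]⟩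

end Gates

lemma stdBasis_eq_single (n : ℕ) (i : Fin n) : stdBasis n i = Pi.single i 1 := by
  ext m
  simp [stdBasis, Pi.single_apply]

/-- Any permutation gate `π ∈ 𝒞₃` can be reduced, by Clifford
permutations `φ₁, φ₂`, to `τ = φ₁ π φ₂` with `τ(0)=0`, `τ(eᵢ)=eᵢ`, and each
`τ Xᵢ τ⁻¹` acting by `v ↦ v + Aᵢv + eᵢ` for strictly lower triangular `Aᵢ`. -/
theorem stmt13 (n : ℕ) (hn : 1 ≤ n) (f : QV n ≃ QV n)
    (hf : permGate n f ∈ CliffordLevel n 3) :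
    ∃ φ₁ φ₂ τ : QV n ≃ QV n,
      permGate n φ₁ ∈ CliffordLevel n 2 ∧
      permGate n φ₂ ∈ CliffordLevel n 2 ∧
      τ = (φ₂.trans f).trans φ₁ ∧
      τ 0 = 0 ∧
      (∀ i : Fin n, τ (stdBasis n i) = stdBasis n i) ∧
      (∀ i : Fin n, ∃ A : Matrix (Fin n) (Fin n) (ZMod 2), StrictLowerTri n A ∧
        ∀ v : QV n, τ (τ.symm v + stdBasis n i) = v + A.mulVec v + stdBasis n i) := by
  obtain ⟨φ, hφ⟩ := (intertwinesTranslations_of_permGate_mem_cliffordLevel_three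
    hf).exists_affineEquiv_triangularlyAdditive 2
    (Module.finrank_fin_fun _) f.surjective
  obtain ⟨L, hL⟩ := hφ.exists_linearEquiv_apply_single (φ.surjective.comp f.surjective) (by simp)
  let τ : QV n ≃ QV n := (L.toEquiv.trans f).trans φ.toEquiv
  have hτ : TriangularlyAdditive τ := hφ.comp L
  have hτe : ∀ i, τ (stdBasis n i) = stdBasis n i := fun i ↦ stdBasis_eq_single n i ▸ hL i
  refine ⟨φ.toEquiv, L.toEquiv, τ,
    (permGate_mem_cliffordLevel_two_iff _).2 ⟨φ.toAffineMap, rfl⟩,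
    (permGate_mem_cliffordLevel_two_iff _).2 ⟨L.toLinearMap.toAffineMap, rfl⟩,
    rfl, hτ.map_zero, hτe, fun i ↦ ?_⟩
  obtain ⟨A, hA, hAτ⟩ := hτ (stdBasis n i)
  exact ⟨A, hA, fun v ↦ by simpa only [τ.apply_symm_apply, hτe] using hAτ (τ.symm v)⟩
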